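/- Let 1 ≤ p < ∞, a > −1, and let φ : (0,∞) → ℂ be measurable with ∫₀^∞ |φ(t)| t^{(a+1)/p − 1} dt < ∞. Let λ ∈ ℂ lie outside the closure of { k̂_{a,p}(ξ) : ξ ∈ ℝ }. Then there exists a measurable function ψ : (0,∞) → ℂ with ∫₀^∞ |ψ(t)| t^{(a+1)/p − 1} dt < ∞ such that λ·ψ(x) − ∫₀^∞ ψ(x/t) φ(t) t⁻¹ dt = φ(x) for almost every x > 0. -/

import Mathlib

open MeasureTheory

/-- The Hausdorff operator `H_φ f(x) = ∫₀^∞ f(x/t) φ(t) t⁻¹ dt`. -/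
noncomputable def Hphi (φ : ℝ → ℂ) (f : ℝ → ℂ) (x : ℝ) : ℂ :=
  ∫ t in Set.Ioi (0 : ℝ), f (x / t) * φ t / (t : ℂ)

/-- `k̂_{a,p}(ξ) = ∫₀^∞ φ(t) t^{c − 1 − iξ} dt` with `c = (a+1)/p`. -/
noncomputable def khat (φ : ℝ → ℂ) (c : ℝ) (ξ : ℝ) : ℂ :=
  ∫ t in Set.Ioi (0 : ℝ), φ t * (t : ℂ) ^ ((c : ℂ) - 1 - Complex.I * (ξ : ℂ))

/-! Under `t = e^s` the weighted space becomes `L¹(ℝ)`, the operator `H_φ` becomes convolution with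
the kernel `k_{a,p}`, and `k̂_{a,p}` becomes its Fourier transform. So it suffices that the spectrum
of the operator of convolution by `k ∈ L¹(ℝ)` lies in the closure of the range of the Fourier
transform of `k`.

Let `z ≠ 0` be in the spectrum of this operator `T`. Since `T = ∫ k(a) τ(a) da` commutes with the
translations `τ(a)`, Gelfand theory gives a character `Φ` of a commutative closed subalgebra
containing them all, with `Φ(T) = z`. As `a ↦ τ(a) T` is norm continuous, `a ↦ Φ(τ(a))` is a
continuous unitary character of `ℝ`, and applying `Φ` to `T * T = ∫ k(a) τ(a) T da` shows that `z`
is a value of the Fourier transform of `k`. The value `0` is covered by the Riemann–Lebesgue lemma.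
-/

open scoped FourierTransform Convolution

lemma exists_smul_sub_apply_eq_of_notMem_spectrum {𝕜 X : Type*}
    [NontriviallyNormedField 𝕜] [NormedAddCommGroup X] [NormedSpace 𝕜 X] {T : X →L[𝕜] X} {l : 𝕜}
    (hl : l ∉ spectrum 𝕜 T) (y : X) : ∃ x, l • x - T x = y := by
  obtain ⟨u, hu⟩ := spectrum.notMem_iff.1 hl
  have hy : (u.val * u.inv) y = y := by rw [u.val_inv, one_apply_eq_self]
  exact ⟨u.inv y, by rwa [hu, Algebra.algebraMap_eq_smul_one] at hy⟩

lemma exists_clm_map_mul_of_mem_spectrum {B : Type*} [NormedRing B] [NormedAlgebra ℂ B]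
    [CompleteSpace B] {S : Set B} (hS : ∀ x ∈ S, ∀ y ∈ S, x * y = y * x) {b : B} (hb : b ∈ S)
    {z : ℂ} (hz : z ∈ spectrum ℂ b) :
    ∃ χ : B →L[ℂ] ℂ, ‖χ‖ ≤ ‖(1 : B)‖ ∧ χ 1 = 1 ∧ χ b = z ∧
      ∀ x ∈ S, ∀ y ∈ S, χ (x * y) = χ x * χ y := by
  let A : Subalgebra ℂ B := (Algebra.adjoin ℂ S).topologicalClosure
  have hSA : S ⊆ A := Algebra.subset_adjoin.trans (Subalgebra.le_topologicalClosure _)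
  have : IsMulCommutative (Algebra.adjoin ℂ S) := Algebra.isMulCommutative_adjoin ℂ hS
  let _ : NormedCommRing A :=
    { (inferInstance : NormedRing A) with
      mul_comm := ((Algebra.adjoin ℂ S).commRingTopologicalClosure mul_comm').mul_comm }
  have : CompleteSpace A := (Subalgebra.isClosed_topologicalClosure _).completeSpace_coe
  have hzA : z ∈ spectrum ℂ (⟨b, hSA hb⟩ : A) := AlgHom.spectrum_apply_subset A.val _ hz
  obtain ⟨χ, hχ⟩ := WeakDual.CharacterSpace.mem_spectrum_iff_exists.1 hzA
  let χL : StrongDual ℂ A := WeakDual.CharacterSpace.toCLM χ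
  obtain ⟨χ', hχ', hnorm⟩ := exists_extension_norm_eq (E := B) (Subalgebra.toSubmodule A) χL
  have hext : ∀ x (hx : x ∈ A), χ' x = χ ⟨x, hx⟩ := fun x hx ↦ hχ' ⟨x, hx⟩
  refine ⟨χ', ?_, ?_, ?_, fun x hx y hy ↦ ?_⟩
  · rw [hnorm]
    refine ContinuousLinearMap.opNorm_le_bound _ (norm_nonneg _) fun x ↦ ?_
    rw [mul_comm]
    exact AlgHom.norm_apply_le_self_mul_norm_one χ x
  · rw [hext 1 A.one_mem]; exact map_one χ
  · rw [hext b (hSA hb), hχ]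
  · rw [hext x (hSA hx), hext y (hSA hy), hext _ (A.mul_mem (hSA hx) (hSA hy)), ← map_mul]
    rfl

lemma exists_forall_eq_circleExp_mul (χ : AddChar ℝ Circle) (hχ : Continuous χ) :
    ∃ ω : ℝ, ∀ x, χ x = Circle.exp (ω * x) := by
  obtain ⟨θ, ⟨hθ₀, hθ⟩, -⟩ := Circle.isCoveringMap_exp.existsUnique_continuousMap_lifts
    ⟨χ, hχ⟩ (0 : ℝ) (0 : ℝ) (by simp)
  have hθχ : ∀ x, Circle.exp (θ x) = χ x := fun x ↦ congrFun hθ x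
  have hexp : ∀ p : ℝ × ℝ, Circle.exp (θ (p.1 + p.2) - θ p.1 - θ p.2) = 1 := fun p ↦ by
    simp only [Circle.exp_sub, hθχ, AddChar.map_add_eq_mul, mul_div_cancel_left, div_self']
  have hadd : ∀ x y, θ (x + y) = θ x + θ y := fun x y ↦ by
    have := Circle.isCoveringMap_exp.const_of_comp (A := ℝ × ℝ)
      (g := fun p ↦ θ (p.1 + p.2) - θ p.1 - θ p.2) (by fun_prop)
      (fun p q ↦ by rw [hexp, hexp]) (x, y) (0, 0)
    simp only [add_zero, hθ₀] at this
    linarith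
  let Θ : ℝ →L[ℝ] ℝ := (AddMonoidHom.mk' θ hadd).toRealLinearMap θ.continuous
  refine ⟨θ 1, fun x ↦ ?_⟩
  have hlin : Θ (x • 1) = x • Θ 1 := Θ.map_smul x 1
  rw [smul_eq_mul, mul_one, smul_eq_mul] at hlin
  rw [← hθχ, mul_comm]
  exact congrArg Circle.exp hlin

lemma exists_addChar_circle_of_norm_le_one {G : Type*} [AddGroup G] (η : AddChar G ℂ)
    (hη : ∀ x, ‖η x‖ ≤ 1) : ∃ χ : AddChar G Circle, ∀ x, (χ x : ℂ) = η x := by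
  have hmul : ∀ x, ‖η x‖ * ‖η (-x)‖ = 1 := fun x ↦ by
    rw [← norm_mul, ← AddChar.map_add_eq_mul, add_neg_cancel, AddChar.map_zero_eq_one, norm_one]
  have hnorm : ∀ x, ‖η x‖ = 1 := fun x ↦
    (hη x).antisymm (by nlinarith [hmul x, hη (-x), norm_nonneg (η x)])
  exact ⟨{
    toFun := fun x ↦ ⟨η x, mem_sphere_zero_iff_norm.2 (hnorm x)⟩
    map_zero_eq_one' := Subtype.ext η.map_zero_eq_one
    map_add_eq_mul' := fun x y ↦ Subtype.ext (η.map_add_eq_mul x y) }, fun _ ↦ rfl⟩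

lemma exists_continuous_addChar_circle {G B : Type*} [AddGroup G] [TopologicalSpace G]
    [NormedRing B] [NormedAlgebra ℂ B] {τ : AddChar G B} (hτ : ∀ a, ‖τ a‖ ≤ 1) {Φ : B →L[ℂ] ℂ}
    (hΦ : ‖Φ‖ ≤ 1) (hΦ₁ : Φ 1 = 1) (hΦτ : ∀ a b, Φ (τ a * τ b) = Φ (τ a) * Φ (τ b)) {T : B}
    (hT : Continuous fun a ↦ τ a * T) (hΦT : ∀ a, Φ (τ a * T) = Φ (τ a) * Φ T) (hT₀ : Φ T ≠ 0) :
    ∃ χ : AddChar G Circle, Continuous χ ∧ ∀ a, (χ a : ℂ) = Φ (τ a) := by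
  let η : AddChar G ℂ :=
    { toFun := fun a ↦ Φ (τ a)
      map_zero_eq_one' := by rw [τ.map_zero_eq_one, hΦ₁]
      map_add_eq_mul' := fun a b ↦ by rw [τ.map_add_eq_mul, hΦτ] }
  have hη : Continuous η := ((Φ.continuous.comp hT).div_const (Φ T)).congr fun a ↦ by
    rw [Function.comp_apply, hΦT, mul_div_cancel_right₀ _ hT₀]
    rfl
  obtain ⟨χ, hχ⟩ := exists_addChar_circle_of_norm_le_one η fun a ↦
    (Φ.le_of_opNorm_le_of_le hΦ (hτ a)).trans_eq (one_mul 1)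
  exact ⟨χ, continuous_induced_rng.2 (hη.congr fun a ↦ (hχ a).symm), hχ⟩

/-- A strongly continuous representation of an additive topological group by contractions of a
normed space. -/
structure IsContractionRep {G X : Type*} [AddGroup G] [TopologicalSpace G] [NormedAddCommGroup X]
    [NormedSpace ℂ X] (τ : AddChar G (X →L[ℂ] X)) : Prop where
  norm_le_one (a : G) : ‖τ a‖ ≤ 1
  continuous_apply (x : X) : Continuous fun a ↦ τ a x

namespace IsContractionRep

variable {G X : Type*} [AddCommGroup G] [TopologicalSpace G] [NormedAddCommGroup X]
  [NormedSpace ℂ X] {τ : AddChar G (X →L[ℂ] X)} (hτ : IsContractionRep τ)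

include hτ

lemma norm_smul_apply_le (z : ℂ) (a : G) (x : X) : ‖z • τ a x‖ ≤ ‖z‖ * ‖x‖ := by
  rw [norm_smul]
  gcongr
  simpa using (τ a).le_of_opNorm_le (hτ.norm_le_one a) x

variable [SecondCountableTopology G] [MeasurableSpace G] [BorelSpace G] {μ : Measure G}

lemma integrable_smul_apply {k : G → ℂ} (hk : Integrable k μ) (x : X) :
    Integrable (fun a ↦ k a • τ a x) μ :=
  (hk.norm.mul_const ‖x‖).mono'
    (hk.aestronglyMeasurable.smul (hτ.continuous_apply x).aestronglyMeasurable)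
    (.of_forall fun a ↦ hτ.norm_smul_apply_le (k a) a x)

omit hτ in
variable (μ) in
/-- The integrated form of a contraction representation `τ`, sending `k ∈ L¹(G)` to the operator
`x ↦ ∫ k(a) τ(a)x dμ(a)`. -/
noncomputable def integrated (hτ : IsContractionRep τ) : Lp ℂ 1 μ →L[ℂ] X →L[ℂ] X :=
  LinearMap.mkContinuous₂
    (LinearMap.mk₂ ℂ (fun k x ↦ ∫ a, k a • τ a x ∂μ)
      (fun k h x ↦ by
        rw [← integral_add (hτ.integrable_smul_apply (L1.integrable_coeFn k) x)
          (hτ.integrable_smul_apply (L1.integrable_coeFn h) x)]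
        refine integral_congr_ae ?_
        filter_upwards [Lp.coeFn_add k h] with a ha
        rw [ha, Pi.add_apply, add_smul])
      (fun z k x ↦ by
        rw [← integral_smul]
        refine integral_congr_ae ?_
        filter_upwards [Lp.coeFn_smul z k] with a ha
        rw [ha, Pi.smul_apply, smul_assoc])
      (fun k x y ↦ by
        simp only [map_add, smul_add]
        exact integral_add (hτ.integrable_smul_apply (L1.integrable_coeFn k) x)
          (hτ.integrable_smul_apply (L1.integrable_coeFn k) y))
      (fun z k x ↦ by simp only [map_smul, smul_comm _ z, integral_smul]))
    1 (fun k x ↦ by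
      rw [one_mul, L1.norm_eq_integral_norm, ← integral_mul_const]
      exact norm_integral_le_of_norm_le ((L1.integrable_coeFn k).norm.mul_const ‖x‖)
        (.of_forall fun a ↦ hτ.norm_smul_apply_le (k a) a x))

lemma integrated_apply (k : Lp ℂ 1 μ) (x : X) :
    hτ.integrated μ k x = ∫ a, k a • τ a x ∂μ := rfl

variable [CompleteSpace X]

lemma mul_integrated_apply (k : Lp ℂ 1 μ) (b : G) (x : X) :
    (τ b * hτ.integrated μ k) x = ∫ a, k a • τ (a + b) x ∂μ := by
  change τ b (hτ.integrated μ k x) = _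
  rw [integrated_apply, ← (τ b).integral_comp_comm
    (hτ.integrable_smul_apply (L1.integrable_coeFn k) x)]
  simp only [map_smul, add_comm _ b, AddChar.map_add_eq_mul, mul_apply_eq_comp]

lemma commute_integrated (k : Lp ℂ 1 μ) (b : G) :
    Commute (τ b) (hτ.integrated μ k) := by
  ext x
  rw [hτ.mul_integrated_apply, mul_apply_eq_comp, integrated_apply]
  simp only [AddChar.map_add_eq_mul, mul_apply_eq_comp]

end IsContractionRep

section Translation

variable {G : Type*} [AddCommGroup G] [TopologicalSpace G] [IsTopologicalAddGroup G]
  [MeasurableSpace G] [BorelSpace G] (μ : Measure G) [μ.IsAddRightInvariant]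

/-- The translation representation `(translation μ a f)(x) = f(x - a)` of `G` on `L¹(G)`. -/
noncomputable def translation : AddChar G (Lp ℂ 1 μ →L[ℂ] Lp ℂ 1 μ) where
  toFun a := (Lp.compMeasurePreservingₗᵢ ℂ (· - a)
    (measurePreserving_sub_right μ a)).toContinuousLinearMap
  map_zero_eq_one' := by
    ext1 f
    refine Lp.ext ?_
    filter_upwards [Lp.coeFn_compMeasurePreserving f (measurePreserving_sub_right μ 0)] with x hx
    exact hx.trans (congrArg f (sub_zero x))
  map_add_eq_mul' a b := by
    ext1 f
    refine Lp.ext ?_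
    have hτ (c : G) (g : Lp ℂ 1 μ) :=
      Lp.coeFn_compMeasurePreserving g (measurePreserving_sub_right μ c)
    filter_upwards [hτ (a + b) f, hτ a (Lp.compMeasurePreserving (· - b)
        (measurePreserving_sub_right μ b) f),
      (measurePreserving_sub_right μ a).quasiMeasurePreserving.ae (hτ b f)] with x hab ha hb
    exact hab.trans ((congrArg f (sub_add_eq_sub_sub x a b)).trans (ha.trans hb).symm)

variable {μ}

lemma coeFn_translation (a : G) (f : Lp ℂ 1 μ) : translation μ a f =ᵐ[μ] fun x ↦ f (x - a) :=
  Lp.coeFn_compMeasurePreserving f (measurePreserving_sub_right μ a)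

variable (μ) in
lemma isContractionRep_translation [LocallyCompactSpace G] [IsLocallyFiniteMeasure μ]
    [μ.InnerRegularCompactLTTop] :
    IsContractionRep (translation μ) where
  norm_le_one _ := LinearIsometry.norm_toContinuousLinearMap_le _
  continuous_apply f := by
    let g : C(G, C(G, G)) := (ContinuousMap.mk (fun q : G × G ↦ q.2 - q.1)).curry
    exact (continuous_const (y := f)).compMeasurePreservingLp g.continuous
      (measurePreserving_sub_right μ) ENNReal.one_ne_top

end Translation

namespace IsContractionRep

variable {G X : Type*} [AddCommGroup G] [TopologicalSpace G] [IsTopologicalAddGroup G]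
  [SecondCountableTopology G] [MeasurableSpace G] [BorelSpace G] {μ : Measure G}
  [μ.IsAddRightInvariant] [NormedAddCommGroup X] [NormedSpace ℂ X] [CompleteSpace X]
  {τ : AddChar G (X →L[ℂ] X)} (hτ : IsContractionRep τ)

include hτ

lemma mul_integrated (b : G) (k : Lp ℂ 1 μ) :
    τ b * hτ.integrated μ k = hτ.integrated μ (translation μ b k) := by
  ext x
  rw [hτ.mul_integrated_apply, integrated_apply, ← integral_sub_right_eq_self _ b]
  refine integral_congr_ae ?_
  filter_upwards [coeFn_translation b k] with a ha
  rw [ha, sub_add_cancel]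

variable [LocallyCompactSpace G] [IsLocallyFiniteMeasure μ] [μ.InnerRegularCompactLTTop]

lemma continuous_mul_integrated (k : Lp ℂ 1 μ) : Continuous fun b ↦ τ b * hτ.integrated μ k := by
  simp only [hτ.mul_integrated]
  exact (hτ.integrated μ).continuous.comp ((isContractionRep_translation μ).continuous_apply k)

lemma integrable_smul_mul_integrated {k : G → ℂ} (hk : Integrable k μ) (h : Lp ℂ 1 μ) :
    Integrable (fun a ↦ k a • (τ a * hτ.integrated μ h)) μ :=
  (hk.norm.mul_const ‖hτ.integrated μ h‖).mono'
    (hk.aestronglyMeasurable.smul (hτ.continuous_mul_integrated h).aestronglyMeasurable)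
    (.of_forall fun a ↦ by
      rw [norm_smul]
      gcongr
      simpa using norm_mul_le_of_le (hτ.norm_le_one a) le_rfl)

lemma integrated_mul_integrated (k h : Lp ℂ 1 μ) :
    hτ.integrated μ k * hτ.integrated μ h = ∫ a, k a • (τ a * hτ.integrated μ h) ∂μ := by
  ext x
  rw [ContinuousLinearMap.integral_apply
    (hτ.integrable_smul_mul_integrated (L1.integrable_coeFn k) h)]
  rfl

theorem spectrum_integrated_subset (k : Lp ℂ 1 μ) :
    spectrum ℂ (hτ.integrated μ k) ⊆
      insert 0 {z | ∃ χ : AddChar G Circle, Continuous χ ∧ z = ∫ a, k a * χ a ∂μ} := by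
  set T := hτ.integrated μ k
  intro z hz
  refine or_iff_not_imp_left.2 fun hz₀ ↦ ?_
  have hcomm : ∀ x ∈ insert T (Set.range τ), ∀ y ∈ insert T (Set.range τ), x * y = y * x := by
    rintro _ (rfl | ⟨a, rfl⟩) _ (rfl | ⟨b, rfl⟩)
    · rfl
    · exact (hτ.commute_integrated k b).symm
    · exact hτ.commute_integrated k a
    · rw [← AddChar.map_add_eq_mul, ← AddChar.map_add_eq_mul, add_comm]
  have hmemT : T ∈ insert T (Set.range τ) := Set.mem_insert T _
  have hmem : ∀ a, τ a ∈ insert T (Set.range τ) := fun a ↦ .inr ⟨a, rfl⟩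
  obtain ⟨Φ, hΦ, hΦ₁, hΦT, hΦmul⟩ := exists_clm_map_mul_of_mem_spectrum hcomm hmemT hz
  obtain ⟨χ, hχ, hχΦ⟩ := exists_continuous_addChar_circle hτ.norm_le_one
    (hΦ.trans ContinuousLinearMap.norm_id_le) hΦ₁ (fun a b ↦ hΦmul _ (hmem a) _ (hmem b))
    (hτ.continuous_mul_integrated k) (fun a ↦ hΦmul _ (hmem a) _ hmemT) (hΦT ▸ hz₀)
  refine ⟨χ, hχ, mul_right_cancel₀ hz₀ ?_⟩
  -- The integral `∫ k(a) τ(a) da` defining `T` converges only strongly, so `Φ` cannot be moved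
  -- inside it; the integral for `T * T` converges in operator norm.
  calc z * z = Φ (T * T) := by rw [hΦmul _ hmemT _ hmemT, hΦT]
    _ = ∫ a, Φ (k a • (τ a * T)) ∂μ := by
        rw [hτ.integrated_mul_integrated, Φ.integral_comp_comm
          (hτ.integrable_smul_mul_integrated (L1.integrable_coeFn k) k)]
    _ = ∫ a, k a * χ a * z ∂μ := by
        simp only [map_smul, hΦmul _ (hmem _) _ hmemT, hΦT, hχΦ, smul_eq_mul, mul_assoc]
    _ = (∫ a, k a * χ a ∂μ) * z := integral_mul_const _ _

end IsContractionRep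

lemma coeFn_integrated_translation {G : Type*} [AddCommGroup G] [TopologicalSpace G]
    [IsTopologicalAddGroup G] [SecondCountableTopology G] [LocallyCompactSpace G]
    [MeasurableSpace G] [BorelSpace G] {μ : Measure G} [μ.IsAddRightInvariant]
    [IsLocallyFiniteMeasure μ] [μ.InnerRegularCompactLTTop] (k g : Lp ℂ 1 μ) :
    (isContractionRep_translation μ).integrated μ k g =ᵐ[μ]
      k ⋆[ContinuousLinearMap.mul ℂ ℂ, μ] g := by
  have hτ := isContractionRep_translation μ
  have hprod : Integrable (fun p : G × G ↦ k p.2 * g (p.1 - p.2)) (μ.prod μ) :=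
    (L1.integrable_coeFn k).convolution_integrand (ContinuousLinearMap.mul ℂ ℂ)
      (L1.integrable_coeFn g)
  refine Integrable.ae_eq_of_forall_setIntegral_eq _ _ (L1.integrable_coeFn _)
    hprod.integral_prod_left fun s _ _ ↦ ?_
  let J : Lp ℂ 1 μ →L[ℝ] ℂ := L1.integralCLM.comp (LpToLpRestrictCLM G ℂ ℝ μ 1 s)
  have hJ : ∀ f : Lp ℂ 1 μ, J f = ∫ x in s, f x ∂μ := fun f ↦
    (L1.integral_eq _).symm.trans <| (L1.integral_eq_integral _).trans <|
      integral_congr_ae (LpToLpRestrictCLM_coeFn ℝ s f)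
  have hswap : Integrable (fun p : G × G ↦ k p.2 * g (p.1 - p.2)) ((μ.restrict s).prod μ) := by
    simpa only [← Measure.prod_restrict, Measure.restrict_univ] using
      hprod.restrict (s := s ×ˢ Set.univ)
  calc ∫ x in s, hτ.integrated μ k g x ∂μ
      = ∫ a, J (k a • translation μ a g) ∂μ := by
        rw [← hJ, hτ.integrated_apply,
          J.integral_comp_comm (hτ.integrable_smul_apply (L1.integrable_coeFn k) g)]
        rfl
    _ = ∫ a, ∫ x in s, k a * g (x - a) ∂μ ∂μ := by
        refine integral_congr_ae (.of_forall fun a ↦ (hJ _).trans ?_)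
        refine integral_congr_ae (ae_restrict_of_ae ?_)
        filter_upwards [Lp.coeFn_smul (k a) (translation μ a g), coeFn_translation a g] with x h h'
        rw [h, Pi.smul_apply, h', smul_eq_mul]
    _ = ∫ x in s, (k ⋆[ContinuousLinearMap.mul ℂ ℂ, μ] g) x ∂μ :=
        (integral_integral_swap hswap).symm

lemma integral_mul_addChar_mem_range_fourier (k : ℝ → ℂ) {χ : AddChar ℝ Circle}
    (hχ : Continuous χ) : ∫ x, k x * χ x ∈ Set.range (𝓕 k) := by
  obtain ⟨ω, hω⟩ := exists_forall_eq_circleExp_mul χ hχ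
  refine ⟨-ω / (2 * Real.pi), ?_⟩
  rw [Real.fourier_real_eq_integral_exp_smul]
  refine integral_congr_ae (.of_forall fun x ↦ ?_)
  have hphase : -2 * Real.pi * x * (-ω / (2 * Real.pi)) = ω * x := by field_simp
  simp only [hphase, hω, Circle.coe_exp, smul_eq_mul, mul_comm (k x)]

lemma zero_mem_closure_range_fourier (k : ℝ → ℂ) : 0 ∈ closure (Set.range (𝓕 k)) :=
  mem_closure_of_tendsto (Real.zero_at_infty_fourier k) (.of_forall Set.mem_range_self)

theorem spectrum_integrated_translation_subset (k : Lp ℂ 1 (volume : Measure ℝ)) :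
    spectrum ℂ ((isContractionRep_translation volume).integrated volume k) ⊆
      closure (Set.range (𝓕 (k : ℝ → ℂ))) :=
  ((isContractionRep_translation volume).spectrum_integrated_subset k).trans <|
    Set.insert_subset (zero_mem_closure_range_fourier k) <| by
      rintro _ ⟨χ, hχ, rfl⟩
      exact subset_closure (integral_mul_addChar_mem_range_fourier k hχ)

theorem exists_sub_convolution_eq {k f : ℝ → ℂ} (hk : Integrable k) (hf : Integrable f) {l : ℂ}
    (hl : l ∉ closure (Set.range (𝓕 k))) :
    ∃ g : ℝ → ℂ, Measurable g ∧ Integrable g ∧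
      ∀ᵐ x, l * g x - (k ⋆[ContinuousLinearMap.mul ℂ ℂ] g) x = f x := by
  let T := (isContractionRep_translation (volume : Measure ℝ)).integrated volume (hk.toL1 k)
  have hl' : l ∉ closure (Set.range (𝓕 (hk.toL1 k : ℝ → ℂ))) := by
    have h𝓕 : 𝓕 (hk.toL1 k : ℝ → ℂ) = 𝓕 k :=
      funext fun w ↦ Real.fourier_congr_ae hk.coeFn_toL1 w
    rwa [h𝓕]
  obtain ⟨g, hg⟩ := exists_smul_sub_apply_eq_of_notMem_spectrum
    (fun h ↦ hl' (spectrum_integrated_translation_subset _ h)) (hf.toL1 f)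
  refine ⟨g, (Lp.stronglyMeasurable g).measurable, L1.integrable_coeFn g, ?_⟩
  have hTg : T g =ᵐ[volume] k ⋆[ContinuousLinearMap.mul ℂ ℂ] g :=
    (coeFn_integrated_translation _ g).trans <| .of_forall <| congrFun <|
      convolution_congr _ hk.coeFn_toL1 .rfl
  filter_upwards [hTg, Lp.coeFn_sub (l • g) (T g), Lp.coeFn_smul l g, hf.coeFn_toL1]
    with x hTx hsub hsmul hfx
  rw [← hTx, ← hfx, ← hg, hsub, Pi.sub_apply, hsmul, Pi.smul_apply, smul_eq_mul]

section ExpSubstitution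

variable {E : Type*} [NormedAddCommGroup E] [NormedSpace ℝ E]

lemma integral_Ioi_zero_eq_integral_exp_smul (F : ℝ → E) :
    ∫ t in Set.Ioi 0, F t = ∫ s, Real.exp s • F (Real.exp s) := by
  have := integral_image_eq_integral_abs_deriv_smul MeasurableSet.univ
    (fun x _ ↦ (Real.hasDerivAt_exp x).hasDerivWithinAt) Real.exp_injective.injOn F
  simpa only [Set.image_univ, Real.range_exp, setIntegral_univ, Real.abs_exp] using this

lemma integrableOn_Ioi_zero_iff_integrable_exp_smul (F : ℝ → E) :
    IntegrableOn F (Set.Ioi 0) ↔ Integrable fun s ↦ Real.exp s • F (Real.exp s) := by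
  have := integrableOn_image_iff_integrableOn_abs_deriv_smul MeasurableSet.univ
    (fun x _ ↦ (Real.hasDerivAt_exp x).hasDerivWithinAt) Real.exp_injective.injOn F
  simpa only [Set.image_univ, Real.range_exp, integrableOn_univ, Real.abs_exp] using this

lemma ae_restrict_Ioi_zero_of_ae_exp {P : ℝ → Prop} (h : ∀ᵐ s, P (Real.exp s)) :
    ∀ᵐ x ∂volume.restrict (Set.Ioi 0), P x := by
  rw [ae_restrict_iff' measurableSet_Ioi]
  refine measure_mono_null (fun x hx ↦ ?_) <|
    addHaar_image_eq_zero_of_differentiableOn_of_addHaar_eq_zero volume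
      Real.differentiable_exp.differentiableOn (ae_iff.1 h)
  obtain ⟨hx₀, hPx⟩ := Classical.not_imp.1 hx
  exact ⟨Real.log x, by rwa [Set.mem_ofPred_eq, Real.exp_log hx₀], Real.exp_log hx₀⟩

end ExpSubstitution

section ExpPullback

/-- The function `s ↦ e^{cs} f(e^s)` on the line attached to `f` on `(0, ∞)`; for `f = φ` and
`c = (a+1)/p` this is the kernel `k_{a,p}`. -/
noncomputable def expPullback (c : ℝ) (f : ℝ → ℂ) (s : ℝ) : ℂ :=
  Real.exp (c * s) • f (Real.exp s)

/-- The inverse `x ↦ x^{-c} g(log x)` of `expPullback c` on functions on `(0, ∞)`. -/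
noncomputable def logPullback (c : ℝ) (g : ℝ → ℂ) (x : ℝ) : ℂ :=
  x ^ (-c) • g (Real.log x)

variable {c : ℝ} {f g : ℝ → ℂ}

lemma expPullback_logPullback (c : ℝ) (g : ℝ → ℂ) : expPullback c (logPullback c g) = g := by
  ext s
  rw [expPullback, logPullback, smul_smul, Real.log_exp, ← Real.exp_mul, ← Real.exp_add,
    mul_neg, mul_comm, add_neg_cancel, Real.exp_zero, one_smul]

lemma measurable_expPullback (c : ℝ) (hf : Measurable f) : Measurable (expPullback c f) := by
  unfold expPullback
  fun_prop

lemma measurable_logPullback (c : ℝ) (hg : Measurable g) : Measurable (logPullback c g) := by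
  unfold logPullback
  fun_prop

lemma integrable_expPullback_iff (hf : Measurable f) :
    Integrable (expPullback c f) ↔
      IntegrableOn (fun t ↦ ‖f t‖ * t ^ (c - 1)) (Set.Ioi 0) := by
  rw [integrableOn_Ioi_zero_iff_integrable_exp_smul,
    ← integrable_norm_iff (measurable_expPullback c hf).aestronglyMeasurable]
  refine integrable_congr (.of_forall fun s ↦ ?_)
  simp only [expPullback, norm_smul, Real.norm_eq_abs, Real.abs_exp, smul_eq_mul]
  have hexp : Real.exp (c * s) = Real.exp s * Real.exp s ^ (c - 1) := by
    rw [← Real.exp_mul, ← Real.exp_add]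
    congr 1
    ring
  rw [hexp]
  ring

lemma khat_eq_fourier_expPullback (φ : ℝ → ℂ) (c ξ : ℝ) :
    khat φ c ξ = 𝓕 (expPullback c φ) (ξ / (2 * Real.pi)) := by
  have hmellin : khat φ c ξ = mellin φ (c - Complex.I * ξ) := by
    simp only [khat, mellin, smul_eq_mul, mul_comm (φ _), sub_right_comm]
  -- `mellin_eq_fourier` substitutes `t = e^{-s}`, which reflects `expPullback c φ`.
  rw [hmellin, mellin_eq_fourier, ← neg_neg (ξ / (2 * Real.pi)), ← Real.fourierInv_eq_fourier_neg,
    Real.fourierInv_eq_fourier_comp_neg]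
  simp [expPullback, neg_div]

lemma range_khat (φ : ℝ → ℂ) (c : ℝ) :
    Set.range (khat φ c) = Set.range (𝓕 (expPullback c φ)) := by
  have hsurj : Function.Surjective fun ξ : ℝ ↦ ξ / (2 * Real.pi) :=
    fun w ↦ ⟨w * (2 * Real.pi), by field_simp⟩
  rw [← hsurj.range_comp (𝓕 (expPullback c φ))]
  exact congrArg Set.range (funext (khat_eq_fourier_expPullback φ c))

lemma expPullback_Hphi (c : ℝ) (φ f : ℝ → ℂ) :
    expPullback c (Hphi φ f) =
      expPullback c φ ⋆[ContinuousLinearMap.mul ℂ ℂ] expPullback c f := by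
  ext s
  rw [expPullback, Hphi, integral_Ioi_zero_eq_integral_exp_smul, ← integral_smul, convolution_def]
  refine integral_congr_ae (.of_forall fun t ↦ ?_)
  have hcs : Real.exp (c * s) = Real.exp (c * t) * Real.exp (c * (s - t)) := by
    rw [← Real.exp_add]
    congr 1
    ring
  have ht : (Real.exp t : ℂ) ≠ 0 := by exact_mod_cast (Real.exp_pos t).ne'
  simp only [expPullback, hcs, ← Real.exp_sub, ContinuousLinearMap.mul_apply', Complex.real_smul]
  push_cast at ht ⊢
  field_simp

end ExpPullback

theorem stmt8_general (c : ℝ) (φ f : ℝ → ℂ) (hφm : Measurable φ)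
    (hφ : IntegrableOn (fun t ↦ ‖φ t‖ * t ^ (c - 1)) (Set.Ioi (0 : ℝ))) (hfm : Measurable f)
    (hf : IntegrableOn (fun t ↦ ‖f t‖ * t ^ (c - 1)) (Set.Ioi (0 : ℝ)))
    (l : ℂ) (hl : l ∉ closure (Set.range (khat φ c))) :
    ∃ ψ : ℝ → ℂ, Measurable ψ ∧
      IntegrableOn (fun t ↦ ‖ψ t‖ * t ^ (c - 1)) (Set.Ioi (0 : ℝ)) ∧
      ∀ᵐ x ∂(volume.restrict (Set.Ioi (0 : ℝ))), l * ψ x - Hphi φ ψ x = f x := by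
  rw [range_khat] at hl
  obtain ⟨g, hgm, hg, hconv⟩ := exists_sub_convolution_eq
    ((integrable_expPullback_iff hφm).2 hφ) ((integrable_expPullback_iff hfm).2 hf) hl
  have hψm := measurable_logPullback c hgm
  refine ⟨logPullback c g, hψm, (integrable_expPullback_iff hψm).1 ?_,
    ae_restrict_Ioi_zero_of_ae_exp ?_⟩
  · rwa [expPullback_logPullback]
  · rw [← expPullback_logPullback c g, ← expPullback_Hphi] at hconv
    filter_upwards [hconv] with s hs
    simp only [expPullback, mul_smul_comm, ← smul_sub] at hs
    exact (smul_right_inj (Real.exp_ne_zero _)).1 hs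

/-- For `1 ≤ p < ∞`, `a > −1`, `φ` measurable with
`∫₀^∞ |φ(t)| t^{(a+1)/p − 1} dt < ∞`, and `l ∈ ℂ` outside the closure of
`{ k̂_{a,p}(ξ) : ξ ∈ ℝ }`, there is a measurable `ψ` with
`∫₀^∞ |ψ(t)| t^{(a+1)/p − 1} dt < ∞` and `l·ψ(x) − (H_φ ψ)(x) = φ(x)` for a.e. `x > 0`. -/
theorem stmt8 (p a : ℝ) (hp : 1 ≤ p) (ha : -1 < a) (φ : ℝ → ℂ) (hφm : Measurable φ)
    (hφ : IntegrableOn (fun t => ‖φ t‖ * t ^ ((a + 1) / p - 1)) (Set.Ioi (0 : ℝ)))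
    (l : ℂ) (hl : l ∉ closure (Set.range (khat φ ((a + 1) / p)))) :
    ∃ ψ : ℝ → ℂ, Measurable ψ ∧
      IntegrableOn (fun t => ‖ψ t‖ * t ^ ((a + 1) / p - 1)) (Set.Ioi (0 : ℝ)) ∧
      ∀ᵐ x ∂(volume.restrict (Set.Ioi (0 : ℝ))), l * ψ x - Hphi φ ψ x = φ x :=
  stmt8_general _ φ φ hφm hφ hφm hφ l hl
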